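/- If m ≥ n are positive integers with gcd(n,m) > 3, then the block-pass sliding game on the King grid K_{n+1,m+1} has no solution with zero blocks; in particular, a robot starting at (1,1) with no blocks present can never pass over the square (2,3), hence opt^P_B(K_{n+1,m+1}) ≥ 1. -/

import Mathlib

/-- Squares, given as (row, column) pairs of integers. -/
abbrev Sq : Type := ℤ × ℤ

/-- `p` is a square of the King grid `K_{N,M}` (rows `1..N`, columns `1..M`). -/
def inGrid (N M : ℕ) (p : Sq) : Prop :=
  1 ≤ p.1 ∧ p.1 ≤ (N : ℤ) ∧ 1 ≤ p.2 ∧ p.2 ≤ (M : ℤ)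

/-- The eight king directions (horizontal, vertical and diagonal). -/
def dirs8 : Set Sq :=
  {(1, 0), (-1, 0), (0, 1), (0, -1), (1, 1), (1, -1), (-1, 1), (-1, -1)}

/-- A square is free if it is on the grid and carries no block. -/
def Free (N M : ℕ) (B : Finset Sq) (p : Sq) : Prop := inGrid N M p ∧ p ∉ B

/-- Sliding from `p` in direction `d` travels exactly `k` steps: all squares along the
way are free, and the next square is off the grid or holds a block. -/
def IsSlideK (N M : ℕ) (B : Finset Sq) (p d : Sq) (k : ℕ) : Prop :=
  (∀ t : ℕ, t ≤ k → Free N M B (p + (t : ℤ) • d)) ∧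
    ¬ Free N M B (p + ((k : ℤ) + 1) • d)

/-- One move of the robot: slide from `p` in some king direction, stopping at `q`. -/
def MoveK (N M : ℕ) (B : Finset Sq) (p q : Sq) : Prop :=
  ∃ d ∈ dirs8, ∃ k : ℕ, IsSlideK N M B p d k ∧ q = p + (k : ℤ) • d

/-- The robot, starting on `p`, can stop on `q` after a finite sequence of moves. -/
def ReachesK (N M : ℕ) (B : Finset Sq) : Sq → Sq → Prop :=
  Relation.ReflTransGen (MoveK N M B)

/-- The robot, starting on `p₀`, passes over the square `s`: during some move of a
finite sequence of moves it occupies or slides through `s`. -/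
def PassesK (N M : ℕ) (B : Finset Sq) (p₀ s : Sq) : Prop :=
  ∃ p, ReachesK N M B p₀ p ∧ ∃ d ∈ dirs8, ∃ k t : ℕ,
    IsSlideK N M B p d k ∧ t ≤ k ∧ s = p + (t : ℤ) • d

/-- A legal block configuration: blocks are on grid squares, and not on `(1,1)`. -/
def BlocksOK (N M : ℕ) (B : Finset Sq) : Prop :=
  ((1 : ℤ), (1 : ℤ)) ∉ B ∧ ∀ p ∈ B, inGrid N M p

/-- `B` solves the block-pass game on the King grid `K_{N,M}`: starting from `(1,1)`,
the robot can pass over every square not in `B`. -/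
def SolvesPassK (N M : ℕ) (B : Finset Sq) : Prop :=
  BlocksOK N M B ∧ ∀ s : Sq, inGrid N M s → s ∉ B → PassesK N M B (1, 1) s

/-- `opt^P_B(K_{N,M})`: the minimum number of blocks solving the block-pass game on
the King grid `K_{N,M}`. -/
noncomputable def optPBK (N M : ℕ) : ℕ :=
  sInf {k | ∃ B : Finset Sq, SolvesPassK N M B ∧ B.card = k}

/-!
Let `g` divide both `n` and `m`, and call a square of `K_{n+1,m+1}` aligned if it is congruent to
`(1, 1)` modulo `g` in both coordinates. On the empty board a slide stops exactly when one of the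
coordinates reaches a side, so its length is the distance from the starting square to one of the
four sides; from an aligned square this is a multiple of `g`. Hence the robot only ever stops on
aligned squares, and it passes only over squares lying on a king line through an aligned square.
For `g > 3` the square `(2, 3)` is on no such line: its offset `(1, 2)` from `(1, 1)` has
coordinates, sum and difference all nonzero and of absolute value at most `3`.
-/

/-- The squares congruent to the one-based corner `(1, 1)` modulo `g`; they are the only squares on
which the robot can stop when `g` divides both side lengths minus one. -/
def IsAligned (g : ℤ) (p : Sq) : Prop := g ∣ p.1 - 1 ∧ g ∣ p.2 - 1

section Directions

variable {d : Sq}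

lemma fst_eq_of_mem_dirs8 (hd : d ∈ dirs8) : d.1 = -1 ∨ d.1 = 0 ∨ d.1 = 1 := by
  rcases hd with rfl | rfl | rfl | rfl | rfl | rfl | rfl | rfl <;> decide

lemma snd_eq_of_mem_dirs8 (hd : d ∈ dirs8) : d.2 = -1 ∨ d.2 = 0 ∨ d.2 = 1 := by
  rcases hd with rfl | rfl | rfl | rfl | rfl | rfl | rfl | rfl <;> decide

lemma eq_zero_or_eq_or_eq_neg_of_mem_dirs8 (hd : d ∈ dirs8) :
    d.1 = 0 ∨ d.2 = 0 ∨ d.1 = d.2 ∨ d.1 = -d.2 := by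
  rcases hd with rfl | rfl | rfl | rfl | rfl | rfl | rfl | rfl <;> decide

end Directions

section Slides

variable {N M k : ℕ} {g : ℤ} {p q s d : Sq}

lemma free_empty_iff : Free N M ∅ p ↔ inGrid N M p :=
  and_iff_left (Finset.notMem_empty p)

lemma eq_sub_one_or_eq_sub_of_last_step {x e l L : ℤ} (he : e = -1 ∨ e = 0 ∨ e = 1)
    (hlast : 1 ≤ x + l * e ∧ x + l * e ≤ L)
    (hnext : ¬ (1 ≤ x + (l + 1) * e ∧ x + (l + 1) * e ≤ L)) :
    l = x - 1 ∨ l = L - x := by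
  rcases he with rfl | rfl | rfl <;> omega

lemma IsSlideK.length_eq_distance_to_side (h : IsSlideK N M ∅ p d k) (hd : d ∈ dirs8) :
    ((k : ℤ) = p.1 - 1 ∨ (k : ℤ) = N - p.1) ∨ ((k : ℤ) = p.2 - 1 ∨ (k : ℤ) = M - p.2) := by
  have hlast : inGrid N M (p + (k : ℤ) • d) := free_empty_iff.mp (h.1 k le_rfl)
  have hnext : ¬ inGrid N M (p + ((k : ℤ) + 1) • d) := mt free_empty_iff.mpr h.2
  obtain ⟨hrow_ge, hrow_le, hcol_ge, hcol_le⟩ := hlast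
  by_cases hrow : 1 ≤ p.1 + ((k : ℤ) + 1) * d.1 ∧ p.1 + ((k : ℤ) + 1) * d.1 ≤ N
  · have hcol : ¬ (1 ≤ p.2 + ((k : ℤ) + 1) * d.2 ∧ p.2 + ((k : ℤ) + 1) * d.2 ≤ M) :=
      fun hcol => hnext ⟨hrow.1, hrow.2, hcol⟩
    exact .inr (eq_sub_one_or_eq_sub_of_last_step (snd_eq_of_mem_dirs8 hd) ⟨hcol_ge, hcol_le⟩ hcol)
  · exact .inl (eq_sub_one_or_eq_sub_of_last_step (fst_eq_of_mem_dirs8 hd) ⟨hrow_ge, hrow_le⟩ hrow)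

lemma IsAligned.dvd_length (hp : IsAligned g p) (hN : g ∣ (N : ℤ) - 1) (hM : g ∣ (M : ℤ) - 1)
    (hd : d ∈ dirs8) (h : IsSlideK N M ∅ p d k) : g ∣ k := by
  rcases h.length_eq_distance_to_side hd with (hk | hk) | (hk | hk) <;> rw [hk]
  · exact hp.1
  · simpa only [sub_sub_sub_cancel_right] using dvd_sub hN hp.1
  · exact hp.2
  · simpa only [sub_sub_sub_cancel_right] using dvd_sub hM hp.2

lemma IsAligned.add_zsmul {l : ℤ} (hp : IsAligned g p) (hl : g ∣ l) (d : Sq) :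
    IsAligned g (p + l • d) := by
  constructor
  · simpa only [Prod.fst_add, Prod.smul_fst, smul_eq_mul, add_sub_right_comm]
      using dvd_add hp.1 (hl.mul_right d.1)
  · simpa only [Prod.snd_add, Prod.smul_snd, smul_eq_mul, add_sub_right_comm]
      using dvd_add hp.2 (hl.mul_right d.2)

lemma IsAligned.of_moveK (hp : IsAligned g p) (hN : g ∣ (N : ℤ) - 1) (hM : g ∣ (M : ℤ) - 1)
    (h : MoveK N M ∅ p q) : IsAligned g q := by
  obtain ⟨d, hd, k, hslide, rfl⟩ := h
  exact hp.add_zsmul (hp.dvd_length hN hM hd hslide) d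

lemma IsAligned.of_reachesK (hp : IsAligned g p) (hN : g ∣ (N : ℤ) - 1) (hM : g ∣ (M : ℤ) - 1)
    (h : ReachesK N M ∅ p q) : IsAligned g q := by
  induction h with
  | refl => exact hp
  | tail _ hmove ih => exact ih.of_moveK hN hM hmove

lemma IsAligned.dvd_of_mem_king_line (hp : IsAligned g p) (hd : d ∈ dirs8) (t : ℤ)
    (hs : s = p + t • d) :
    g ∣ s.1 - 1 ∨ g ∣ s.2 - 1 ∨ g ∣ s.1 - s.2 ∨ g ∣ (s.1 - 1) + (s.2 - 1) := by
  have hs₁ : s.1 = p.1 + t * d.1 := congrArg Prod.fst hs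
  have hs₂ : s.2 = p.2 + t * d.2 := congrArg Prod.snd hs
  rcases eq_zero_or_eq_or_eq_neg_of_mem_dirs8 hd with h | h | h | h
  · left
    simpa only [hs₁, h, mul_zero, add_zero] using hp.1
  · right; left
    simpa only [hs₂, h, mul_zero, add_zero] using hp.2
  · right; right; left
    have hdiff : s.1 - s.2 = (p.1 - 1) - (p.2 - 1) := by rw [hs₁, hs₂, h]; ring
    exact hdiff ▸ dvd_sub hp.1 hp.2
  · right; right; right
    have hsum : (s.1 - 1) + (s.2 - 1) = (p.1 - 1) + (p.2 - 1) := by rw [hs₁, hs₂, h]; ring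
    exact hsum ▸ dvd_add hp.1 hp.2

lemma IsAligned.dvd_of_passesK (hp : IsAligned g p) (hN : g ∣ (N : ℤ) - 1)
    (hM : g ∣ (M : ℤ) - 1) (h : PassesK N M ∅ p s) :
    g ∣ s.1 - 1 ∨ g ∣ s.2 - 1 ∨ g ∣ s.1 - s.2 ∨ g ∣ (s.1 - 1) + (s.2 - 1) := by
  obtain ⟨q, hq, d, hd, _, t, _, _, hs⟩ := h
  exact (hp.of_reachesK hN hM hq).dvd_of_mem_king_line hd t hs

end Slides

lemma isAligned_one_one (g : ℤ) : IsAligned g (1, 1) :=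
  ⟨dvd_zero g, dvd_zero g⟩

lemma not_passesK_two_three {N M : ℕ} {g : ℤ} (hg : 3 < g) (hN : g ∣ (N : ℤ) - 1)
    (hM : g ∣ (M : ℤ) - 1) : ¬ PassesK N M ∅ (1, 1) (2, 3) := by
  intro h
  have hnot_dvd (c : ℤ) (hc : c ≠ 0) (hc3 : |c| ≤ 3) : ¬ g ∣ c := fun hdvd =>
    hc (Int.eq_zero_of_abs_lt_dvd hdvd (hc3.trans_lt hg))
  rcases (isAligned_one_one g).dvd_of_passesK hN hM h with hrow | hcol | hdiff | hsum
  · exact hnot_dvd (2 - 1) (by decide) (by decide) hrow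
  · exact hnot_dvd (3 - 1) (by decide) (by decide) hcol
  · exact hnot_dvd (2 - 3) (by decide) (by decide) hdiff
  · exact hnot_dvd ((2 - 1) + (3 - 1)) (by decide) (by decide) hsum

lemma passesK_one_one_self {N M : ℕ} {B : Finset Sq} (h : Free N M B (1, 1)) :
    PassesK N M B (1, 1) (1, 1) := by
  have hslide : IsSlideK N M B (1, 1) (-1, 0) 0 := by
    refine ⟨fun t ht => ?_, fun hfree => ?_⟩
    · simpa [Nat.le_zero.mp ht] using h
    · simpa using hfree.1.1
  exact ⟨(1, 1), .refl, (-1, 0), by simp [dirs8], 0, 0, hslide, le_rfl, by simp⟩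

section OptimalNumber

variable (N M : ℕ)

lemma exists_solvesPassK : ∃ B : Finset Sq, SolvesPassK N M B := by
  let B : Finset Sq := (Finset.Icc (1 : ℤ) N ×ˢ Finset.Icc (1 : ℤ) M).erase (1, 1)
  have mem_B (p : Sq) : p ∈ B ↔ p ≠ (1, 1) ∧ inGrid N M p := by
    simp only [B, Finset.mem_erase, Finset.mem_product, Finset.mem_Icc, inGrid, and_assoc]
  refine ⟨B, ⟨Finset.notMem_erase _ _, fun p hp => ((mem_B p).mp hp).2⟩, fun s hs hsB => ?_⟩
  obtain rfl : s = (1, 1) := by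
    by_contra hne
    exact hsB ((mem_B s).mpr ⟨hne, hs⟩)
  exact passesK_one_one_self ⟨hs, hsB⟩

-- As `sInf ∅ = 0`, the forward direction would fail if no configuration at all were a solution.
lemma optPBK_eq_zero_iff : optPBK N M = 0 ↔ SolvesPassK N M ∅ := by
  obtain ⟨B, hB⟩ := exists_solvesPassK N M
  have hne : {k | ∃ B : Finset Sq, SolvesPassK N M B ∧ B.card = k} ≠ ∅ :=
    Set.Nonempty.ne_empty ⟨B.card, B, hB, rfl⟩
  simp only [optPBK, Nat.sInf_eq_zero, hne, or_false, Set.mem_ofPred_eq, Finset.card_eq_zero,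
    exists_eq_right]

end OptimalNumber

theorem stmt11_general (n m : ℕ) (hn : 1 ≤ n) (hm : 1 ≤ m) (hgcd : 3 < Nat.gcd n m) :
    ¬ PassesK (n + 1) (m + 1) (∅ : Finset Sq) (1, 1) (2, 3) ∧
    ¬ SolvesPassK (n + 1) (m + 1) (∅ : Finset Sq) ∧
    1 ≤ optPBK (n + 1) (m + 1) := by
  have hgn : (Nat.gcd n m : ℤ) ∣ ((n + 1 : ℕ) : ℤ) - 1 := by
    simpa using Int.natCast_dvd_natCast.mpr (Nat.gcd_dvd_left n m)
  have hgm : (Nat.gcd n m : ℤ) ∣ ((m + 1 : ℕ) : ℤ) - 1 := by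
    simpa using Int.natCast_dvd_natCast.mpr (Nat.gcd_dvd_right n m)
  have hpass : ¬ PassesK (n + 1) (m + 1) ∅ (1, 1) (2, 3) :=
    not_passesK_two_three (Nat.cast_lt.mpr hgcd) hgn hgm
  have hgrid : inGrid (n + 1) (m + 1) (2, 3) := by
    have hn3 : 3 < n := hgcd.trans_le (Nat.gcd_le_left m hn)
    have hm3 : 3 < m := hgcd.trans_le (Nat.gcd_le_right n hm)
    simp only [inGrid]
    omega
  have hsolve : ¬ SolvesPassK (n + 1) (m + 1) ∅ := fun h =>
    hpass (h.2 (2, 3) hgrid (Finset.notMem_empty _))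
  exact ⟨hpass, hsolve, Nat.one_le_iff_ne_zero.mpr (mt (optPBK_eq_zero_iff _ _).mp hsolve)⟩

/-- If `m ≥ n ≥ 1` and `gcd(n,m) > 3`, then the block-pass game on the King grid
`K_{n+1,m+1}` has no solution with zero blocks: with no blocks present, the robot
starting at `(1,1)` can never pass over the square `(2,3)`; hence
`opt^P_B(K_{n+1,m+1}) ≥ 1`. -/
theorem stmt11 (n m : ℕ) (hn : 1 ≤ n) (hnm : n ≤ m) (hgcd : 3 < Nat.gcd n m) :
    ¬ PassesK (n + 1) (m + 1) (∅ : Finset Sq) (1, 1) (2, 3) ∧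
    ¬ SolvesPassK (n + 1) (m + 1) (∅ : Finset Sq) ∧
    1 ≤ optPBK (n + 1) (m + 1) :=
  stmt11_general n m hn (hn.trans hnm) hgcd
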